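/- The series identity ∑_{n≥1} (−1/4)^n · (1)_n / ((1/2)_n) · (10n − 3)/(n² (2n−1)) = −π²/3 holds. -/

import Mathlib

/-!
For `f n s = (-1)ⁿ n!² / ((s + n) (s)₂ₙ₊₁)`, so that `f 0 s = 1 / s²`, Zeilberger's algorithm
finds a companion `g` with `f n s - f (n + 1) s = g n s - g n (s + 1)`. Summing this over
`s, s + 1, s + 2, …` gives `T n - T (n + 1) = g n s` for `T n = ∑ₖ f n (s + k)`. Since
`2ⁿ n!² ≤ (2n)!`, the sums `T n` decay geometrically, and hence `∑ₙ g n s = T 0 = ∑ₖ 1 / (s + k)²`.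
At `s = 1` the right-hand side is `ζ(2)`, and the duplication formula
`(s)₂ₙ = 4ⁿ (s/2)ₙ ((s+1)/2)ₙ` brings `g n 1` into the required shape.
-/

/-- The rising factorial (Pochhammer symbol) `(a)ₙ = a(a+1)⋯(a+n-1)`. -/
noncomputable def risingFactorial (a : ℝ) (n : ℕ) : ℝ :=
  ∏ i ∈ Finset.range n, (a + i)

open Filter Topology
open scoped Nat

theorem hasSum_of_wz_pair {E : Type*} [AddCommGroup E] [TopologicalSpace E]
    [IsTopologicalAddGroup E] [T2Space E] {F G : ℕ → ℕ → E} {T : ℕ → E}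
    (hFG : ∀ n k, F n k - F (n + 1) k = G n k - G n (k + 1))
    (hG : ∀ n, Tendsto (G n) atTop (𝓝 0)) (hF : ∀ n, HasSum (F n) (T n)) (hT : Summable T) :
    HasSum (fun n => G n 0) (T 0) := by
  have column_zero (n : ℕ) : G n 0 = T n - T (n + 1) := by
    have hsum := ((hF n).sub (hF (n + 1))).tendsto_sum_nat
    simp only [hFG, Finset.sum_range_sub'] at hsum
    have hlim : Tendsto (fun k => G n 0 - G n k) atTop (𝓝 (G n 0)) := by
      simpa using (hG n).const_sub (G n 0)
    exact tendsto_nhds_unique hlim hsum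
  have hshift : HasSum (fun n => T (n + 1)) ((∑' n, T n) - T 0) := by
    simpa using (hasSum_nat_add_iff' 1).mpr hT.hasSum
  simpa [column_zero] using hT.hasSum.sub hshift

theorem two_pow_mul_factorial_sq_le (n : ℕ) : 2 ^ n * n ! ^ 2 ≤ (2 * n)! := by
  induction n with
  | zero => simp
  | succ n ih =>
    calc 2 ^ (n + 1) * (n + 1)! ^ 2 = (2 * n + 2) * (n + 1) * (2 ^ n * n ! ^ 2) := by
          rw [Nat.factorial_succ]; ring
      _ ≤ (2 * n + 2) * (2 * n + 1) * (2 * n)! := by gcongr; lia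
      _ = (2 * (n + 1))! := by
          rw [show 2 * (n + 1) = 2 * n + 1 + 1 by ring, Nat.factorial_succ, Nat.factorial_succ]
          ring

theorem risingFactorial_succ (a : ℝ) (n : ℕ) :
    risingFactorial a (n + 1) = risingFactorial a n * (a + n) :=
  Finset.prod_range_succ _ _

theorem risingFactorial_succ_left (a : ℝ) (n : ℕ) :
    risingFactorial a (n + 1) = a * risingFactorial (a + 1) n := by
  simp [risingFactorial, Finset.prod_range_succ', mul_comm, add_assoc, add_comm (1 : ℝ)]

theorem risingFactorial_pos {a : ℝ} (ha : 0 < a) (n : ℕ) : 0 < risingFactorial a n :=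
  Finset.prod_pos fun _ _ => by positivity

theorem risingFactorial_le_risingFactorial {a b : ℝ} (ha : 0 ≤ a) (hab : a ≤ b) (n : ℕ) :
    risingFactorial a n ≤ risingFactorial b n :=
  Finset.prod_le_prod (fun _ _ => by positivity) fun _ _ => by gcongr

theorem risingFactorial_one (n : ℕ) : risingFactorial 1 n = n ! := by
  simp [risingFactorial, ← Finset.prod_range_add_one_eq_factorial, add_comm]

theorem risingFactorial_two_mul (a : ℝ) (n : ℕ) :
    risingFactorial a (2 * n) =
      4 ^ n * risingFactorial (a / 2) n * risingFactorial ((a + 1) / 2) n := by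
  induction n with
  | zero => simp [risingFactorial]
  | succ n ih =>
    rw [show 2 * (n + 1) = 2 * n + 1 + 1 by ring]
    simp only [risingFactorial_succ, ih]
    push_cast
    ring

theorem mul_factorial_le_risingFactorial_succ {s : ℝ} (hs : 0 ≤ s) (n : ℕ) :
    s * n ! ≤ risingFactorial s (n + 1) := by
  rw [risingFactorial_succ_left, ← risingFactorial_one]
  gcongr
  exact risingFactorial_le_risingFactorial zero_le_one (by linarith) n

theorem mul_two_pow_mul_factorial_sq_le_risingFactorial {s : ℝ} (hs : 0 ≤ s) (n : ℕ) :
    s * (2 ^ n * (n ! : ℝ) ^ 2) ≤ risingFactorial s (2 * n + 1) := by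
  refine le_trans ?_ (mul_factorial_le_risingFactorial_succ hs (2 * n))
  gcongr
  exact_mod_cast two_pow_mul_factorial_sq_le n

/-- The first member `f` of the Wilf–Zeilberger pair, with the summation index absorbed into the
real variable `s`. -/
noncomputable def wzF (n : ℕ) (s : ℝ) : ℝ :=
  (-1) ^ n * ((n ! : ℝ) ^ 2 / ((s + n) * risingFactorial s (2 * n + 1)))

/-- The second member `g` of the Wilf–Zeilberger pair, the companion of `wzF`. -/
noncomputable def wzG (n : ℕ) (s : ℝ) : ℝ :=
  (-1) ^ n * ((n ! : ℝ) ^ 2 / risingFactorial s (2 * n + 2) *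
    ((s + 3 * n + 3 / 2) / (2 * n + 1) + (n + 1) / (s + n)))

theorem wzF_zero (s : ℝ) : wzF 0 s = 1 / s ^ 2 := by
  simp [wzF, risingFactorial, sq]

theorem wzF_sub_wzF_succ {s : ℝ} (hs : 0 < s) (n : ℕ) :
    wzF n s - wzF (n + 1) s = wzG n s - wzG n (s + 1) := by
  have hP_two : risingFactorial s (2 * n + 2) =
      risingFactorial s (2 * n + 1) * (s + 2 * n + 1) := by
    rw [risingFactorial_succ]; push_cast; ring
  have hP_three : risingFactorial s (2 * (n + 1) + 1) =
      risingFactorial s (2 * n + 1) * (s + 2 * n + 1) * (s + 2 * n + 2) := by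
    rw [show 2 * (n + 1) + 1 = 2 * n + 2 + 1 by ring, risingFactorial_succ, hP_two]
    push_cast; ring
  have hP_shift : risingFactorial (s + 1) (2 * n + 2) =
      risingFactorial s (2 * n + 1) * (s + 2 * n + 1) * (s + 2 * n + 2) / s := by
    rw [eq_div_iff hs.ne', ← hP_three, mul_comm]
    exact (risingFactorial_succ_left s (2 * n + 2)).symm
  rw [wzF, wzF, wzG, wzG, hP_two, hP_three, hP_shift, Nat.factorial_succ]
  push_cast
  rw [show s + 1 + (n : ℝ) = s + (n + 1) by ring]
  field_simp
  ring

theorem abs_wzF_le {s : ℝ} (hs : 0 < s) (n : ℕ) : |wzF n s| ≤ (1 / 2) ^ n * (1 / s ^ 2) := by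
  have hP := risingFactorial_pos hs (2 * n + 1)
  calc |wzF n s| = (n ! : ℝ) ^ 2 / ((s + n) * risingFactorial s (2 * n + 1)) := by
        rw [wzF, abs_mul, abs_neg_one_pow, one_mul, abs_of_nonneg (by positivity)]
    _ ≤ (n ! : ℝ) ^ 2 / (s * (s * (2 ^ n * (n ! : ℝ) ^ 2))) := by
        gcongr
        · linarith [n.cast_nonneg (α := ℝ)]
        · exact mul_two_pow_mul_factorial_sq_le_risingFactorial hs.le n
    _ = (1 / 2) ^ n * (1 / s ^ 2) := by
        rw [one_div_pow]
        field_simp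

theorem abs_wzG_le {s : ℝ} (hs : 1 ≤ s) (n : ℕ) : |wzG n s| ≤ 5 / 2 * s⁻¹ := by
  have hs₀ : 0 < s := by linarith
  have hP := risingFactorial_pos hs₀ (2 * n + 2)
  have hP_le : s * (n ! : ℝ) ^ 2 * (s + 2 * n + 1) ≤ risingFactorial s (2 * n + 2) := by
    calc s * (n ! : ℝ) ^ 2 * (s + 2 * n + 1)
        ≤ s * (2 ^ n * (n ! : ℝ) ^ 2) * (s + 2 * n + 1) := by
          gcongr
          exact le_mul_of_one_le_left (by positivity) (one_le_pow₀ one_le_two)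
      _ ≤ risingFactorial s (2 * n + 1) * (s + 2 * n + 1) := by
          gcongr
          exact mul_two_pow_mul_factorial_sq_le_risingFactorial hs₀.le n
      _ = risingFactorial s (2 * n + 2) := by
          rw [risingFactorial_succ s (2 * n + 1)]; push_cast; ring
  have h_left : (s + 3 * n + 3 / 2) / (2 * n + 1) ≤ s + 3 * n + 3 / 2 :=
    div_le_self (by positivity) (by linarith)
  have h_right : ((n : ℝ) + 1) / (s + n) ≤ 1 := div_le_one_of_le₀ (by linarith) (by positivity)
  calc |wzG n s| = (n ! : ℝ) ^ 2 / risingFactorial s (2 * n + 2) *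
        ((s + 3 * n + 3 / 2) / (2 * n + 1) + (n + 1) / (s + n)) := by
        rw [wzG, abs_mul, abs_neg_one_pow, one_mul, abs_of_nonneg (by positivity)]
    _ ≤ (n ! : ℝ) ^ 2 / (s * (n ! : ℝ) ^ 2 * (s + 2 * n + 1)) * (5 / 2 * (s + 2 * n + 1)) := by
        gcongr
        linarith
    _ = 5 / 2 * s⁻¹ := by field_simp

theorem tendsto_wzG_atTop (n : ℕ) : Tendsto (wzG n) atTop (𝓝 0) := by
  have hlim : Tendsto (fun s : ℝ => 5 / 2 * s⁻¹) atTop (𝓝 0) := by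
    simpa using tendsto_inv_atTop_zero.const_mul (5 / 2 : ℝ)
  refine squeeze_zero_norm' ?_ hlim
  filter_upwards [eventually_ge_atTop 1] with s hs using abs_wzG_le hs n

theorem summable_one_div_add_natCast_sq (s : ℝ) : Summable fun k : ℕ => 1 / (s + k) ^ 2 := by
  simpa [add_comm] using (Real.summable_one_div_nat_add_rpow s 2).mpr one_lt_two

theorem tsum_one_div_one_add_natCast_sq :
    ∑' k : ℕ, 1 / (1 + k : ℝ) ^ 2 = Real.pi ^ 2 / 6 := by
  have h := ((hasSum_nat_add_iff' 1).mpr hasSum_zeta_two).tsum_eq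
  simpa [add_comm] using h

theorem hasSum_wzG {s : ℝ} (hs : 0 < s) :
    HasSum (fun n => wzG n s) (∑' k : ℕ, 1 / (s + k) ^ 2) := by
  have hpos (k : ℕ) : 0 < s + k := by positivity
  have hbound (n : ℕ) (k : ℕ) : ‖wzF n (s + k)‖ ≤ (1 / 2) ^ n * (1 / (s + k) ^ 2) :=
    abs_wzF_le (hpos k) n
  have hsum (n : ℕ) : Summable fun k : ℕ => (1 / 2 : ℝ) ^ n * (1 / (s + k) ^ 2) :=
    (summable_one_div_add_natCast_sq s).mul_left _
  have hdecay (n : ℕ) :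
      ‖∑' k : ℕ, wzF n (s + k)‖ ≤ (1 / 2) ^ n * ∑' k : ℕ, 1 / (s + k) ^ 2 := by
    rw [← tsum_mul_left]
    exact tsum_of_norm_bounded (hsum n).hasSum (hbound n)
  have hwz := hasSum_of_wz_pair (F := fun n k => wzF n (s + k)) (G := fun n k => wzG n (s + k))
    (fun n k => by simpa [add_assoc] using wzF_sub_wzF_succ (hpos k) n)
    (fun n => (tendsto_wzG_atTop n).comp
      (tendsto_atTop_add_const_left _ s tendsto_natCast_atTop_atTop))
    (fun n => (Summable.of_norm_bounded (hsum n) (hbound n)).hasSum)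
    (Summable.of_norm_bounded (summable_geometric_two.mul_right _) hdecay)
  simpa only [wzF_zero, Nat.cast_zero, add_zero] using hwz

theorem neg_two_mul_wzG (s : ℝ) (n : ℕ) :
    -2 * wzG n s = (-1 / 4) ^ (n + 1) * risingFactorial 1 (n + 1) ^ 2 /
      (risingFactorial (s / 2) (n + 1) * risingFactorial ((s + 1) / 2) (n + 1)) *
      (((2 * s + 6 * n + 3) / (2 * n + 1) + 2 * (n + 1) / (s + n)) / (n + 1) ^ 2) := by
  rw [wzG, show 2 * n + 2 = 2 * (n + 1) by ring, risingFactorial_two_mul, risingFactorial_one,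
    Nat.factorial_succ, div_pow]
  push_cast
  field_simp
  ring

theorem pi2_series_general {s : ℝ} (hs : 0 < s) :
    HasSum (fun n : ℕ => (-1 / 4) ^ (n + 1) * risingFactorial 1 (n + 1) ^ 2 /
        (risingFactorial (s / 2) (n + 1) * risingFactorial ((s + 1) / 2) (n + 1)) *
        (((2 * s + 6 * n + 3) / (2 * n + 1) + 2 * (n + 1) / (s + n)) / (n + 1) ^ 2))
      (-2 * ∑' k : ℕ, 1 / (s + k) ^ 2) := by
  simpa only [neg_two_mul_wzG s] using (hasSum_wzG hs).mul_left (-2)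

theorem pi2_series_summand_eq (n : ℕ) :
    (-1 / 4 : ℝ) ^ (n + 1) * risingFactorial 1 (n + 1) / risingFactorial (1 / 2) (n + 1) *
        ((10 * ((n : ℝ) + 1) - 3) / (((n : ℝ) + 1) ^ 2 * (2 * ((n : ℝ) + 1) - 1))) =
      (-1 / 4) ^ (n + 1) * risingFactorial 1 (n + 1) ^ 2 /
        (risingFactorial (1 / 2) (n + 1) * risingFactorial ((1 + 1) / 2) (n + 1)) *
        (((2 * 1 + 6 * n + 3) / (2 * n + 1) + 2 * (n + 1) / (1 + n)) / (n + 1) ^ 2) := by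
  rw [add_self_div_two, show 2 * ((n : ℝ) + 1) - 1 = 2 * n + 1 by ring]
  field_simp
  ring

/-- `∑_{n≥1} (−1/4)^n (1)ₙ/(1/2)ₙ (10n−3)/(n²(2n−1)) = −π²/3`. -/
theorem pi2_series :
    ∑' n : ℕ, ((-1 / 4 : ℝ) ^ (n + 1) * risingFactorial 1 (n + 1) /
        risingFactorial (1 / 2) (n + 1) *
        ((10 * ((n : ℝ) + 1) - 3) / (((n : ℝ) + 1) ^ 2 * (2 * ((n : ℝ) + 1) - 1))))
      = -Real.pi ^ 2 / 3 := by
  rw [tsum_congr pi2_series_summand_eq, (pi2_series_general one_pos).tsum_eq,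
    tsum_one_div_one_add_natCast_sq]
  ring
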